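/- Let E be a finite-dimensional (not necessarily associative, not necessarily unital, not necessarily commutative) algebra over a field that admits a complete flag of subalgebras, i.e. a chain 0 = U_0 ⊊ U_1 ⊊ ... ⊊ U_n = E of subalgebras with dim U_i = i for all 0 ≤ i ≤ n. Then the subalgebra lattice of E is modular if and only if every subalgebra of E is a quasi-ideal. -/

import Mathlib

/-!
Write `dim` for the dimension of a subalgebra. Intersecting the given flag with a subalgebra `B`
produces a chain whose dimensions grow by at most one at each step, so `B` contains subalgebras of
every dimension up to `dim B`; in particular a nonzero `B` has a subalgebra of codimension one.

If the subalgebra lattice is modular, a Jordan–Hölder argument then shows that every covering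
pair `A ⋖ B` has `dim B = dim A + 1` (`covBy_degree`). Hence `dim` is the rank function of the
lattice, and rank functions of modular lattices are submodular (`degree_sup_add_degree_inf_le`):
`dim (S ⊔ T) + dim (S ⊓ T) ≤ dim S + dim T`. The right-hand side is `dim (S + T) + dim (S ⊓ T)`,
so the inclusion `S + T ⊆ S ⊔ T` is an equality.

Conversely, if every subalgebra is a quasi-ideal, then joins and meets of subalgebras are computed
in the lattice of subspaces, which is modular.
-/

/-- The subalgebra lattice of `E` is modular. -/
def IsModularAlgebra (K E : Type*) [Field K] [NonUnitalNonAssocRing E] [Module K E]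
    [IsScalarTower K E E] [SMulCommClass K E E] : Prop :=
  ∀ U V W : NonUnitalSubalgebra K E, U ≤ W → U ⊔ (V ⊓ W) = (U ⊔ V) ⊓ W

/-- A subalgebra `U` is a quasi-ideal if `⟨U, V⟩ = U + V` for every subalgebra `V`. -/
def IsQuasiIdeal {K E : Type*} [Field K] [NonUnitalNonAssocRing E] [Module K E]
    [IsScalarTower K E E] [SMulCommClass K E E] (U : NonUnitalSubalgebra K E) : Prop :=
  ∀ V : NonUnitalSubalgebra K E,
    (U ⊔ V).toSubmodule = U.toSubmodule ⊔ V.toSubmodule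

/-- In a modular lattice with a strictly monotone `d : L → ℕ` such that every element of nonzero
degree dominates one of degree one less, `d` increases by exactly one along covers. -/
lemma covBy_degree {L : Type*} [Lattice L] [IsModularLattice L] (d : L → ℕ) (hd : StrictMono d)
    (hflag : ∀ b, d b ≠ 0 → ∃ c ≤ b, d c + 1 = d b) :
    ∀ (n : ℕ) (a b : L), d b = n → a ⋖ b → d b = d a + 1 := by
  intro n
  induction n using Nat.strong_induction_on with
  | _ n ih =>
    rintro a b rfl hab
    have hlt := hd hab.lt
    obtain ⟨c, hcb, hc⟩ := hflag b (by omega)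
    have hcb' : c ⋖ b := by
      refine ⟨lt_of_le_of_ne hcb (by rintro rfl; omega), fun x h1 h2 => ?_⟩
      have := hd h1
      have := hd h2
      omega
    by_cases hac : a = c
    · subst hac; exact hc.symm
    -- `a` and `c` are distinct coatoms below `b`, so `a ⊓ c` is covered by both.
    have hsup : a ⊔ c = b := hab.wcovBy.sup_eq hcb'.wcovBy hac
    have h1 : a ⊓ c ⋖ a := inf_covBy_of_covBy_sup_right (hsup.symm ▸ hcb')
    have h2 : a ⊓ c ⋖ c := inf_covBy_of_covBy_sup_left (hsup.symm ▸ hab)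
    have e1 := ih _ hlt (a ⊓ c) a rfl h1
    have e2 := ih _ (by omega) (a ⊓ c) c rfl h2
    omega

/-- A degree function as in `covBy_degree` is submodular: climb from `s ⊓ t` to `t` through covers
and take the join of each step with `s`. -/
lemma degree_sup_add_degree_inf_le {L : Type*} [Lattice L] [IsModularLattice L] (d : L → ℕ)
    (hd : StrictMono d) (hflag : ∀ b, d b ≠ 0 → ∃ c ≤ b, d c + 1 = d b) (s : L) :
    ∀ (n : ℕ) (t : L), d t = n → d (s ⊔ t) + d (s ⊓ t) ≤ d s + d t := by
  intro n
  induction n using Nat.strong_induction_on with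
  | _ n ih =>
    rintro t rfl
    by_cases hst : t ≤ s
    · rw [sup_eq_left.2 hst, inf_eq_right.2 hst]
    have hlt : s ⊓ t < t := lt_of_le_of_ne inf_le_right (fun h => hst (inf_eq_right.1 h))
    -- An element of maximal degree in `[s ⊓ t, t)` is covered by `t`.
    obtain ⟨t', ⟨hst', ht't⟩, hmax⟩ :=
      Set.Finite.exists_maximalFor' d {x | s ⊓ t ≤ x ∧ x < t}
        ((Set.finite_Iio (d t)).subset (by rintro _ ⟨x, hx, rfl⟩; exact hd hx.2))
        ⟨s ⊓ t, le_rfl, hlt⟩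
    have hcov : t' ⋖ t := by
      refine ⟨ht't, fun x h1 h2 => ?_⟩
      have := hd h1
      have := hmax (j := x) ⟨hst'.trans h1.le, h2⟩ this.le
      omega
    have hinf : s ⊓ t' = s ⊓ t :=
      le_antisymm (inf_le_inf_left _ ht't.le) (le_inf inf_le_left hst')
    have hsup : s ⊔ t' ⋖ s ⊔ t := by
      have e : (s ⊔ t') ⊔ t = s ⊔ t := by rw [sup_assoc, sup_eq_right.2 ht't.le]
      have e' : (s ⊔ t') ⊓ t = t' := by
        rw [sup_comm, sup_inf_assoc_of_le _ ht't.le, sup_eq_left.2 (hinf ▸ inf_le_right)]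
      rw [← e]
      exact covBy_sup_of_inf_covBy_right (e'.symm ▸ hcov)
    have e1 := ih _ (hd ht't) t' rfl
    have e2 := covBy_degree d hd hflag _ _ _ rfl hsup
    have e3 := covBy_degree d hd hflag _ _ _ rfl hcov
    rw [hinf] at e1
    omega

/-- A complete flag of subalgebras cuts out, inside every subalgebra `B`, subalgebras of all
dimensions up to that of `B`. -/
lemma exists_le_finrank_eq {K E : Type*} [Field K] [NonUnitalNonAssocRing E] [Module K E]
    [IsScalarTower K E E] [SMulCommClass K E E] [FiniteDimensional K E] {n : ℕ}
    (U : Fin (n + 1) → NonUnitalSubalgebra K E) (hmono : StrictMono U)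
    (hdim : ∀ i, Module.finrank K (U i) = (i : ℕ)) (B : NonUnitalSubalgebra K E)
    (i : Fin (n + 1)) :
    ∀ m ≤ Module.finrank K (U i ⊓ B : NonUnitalSubalgebra K E),
      ∃ C ≤ B, Module.finrank K C = m := by
  induction i using Fin.induction with
  | zero =>
    intro m hm
    have h : Module.finrank K (U 0 ⊓ B : NonUnitalSubalgebra K E) ≤ Module.finrank K (U 0) :=
      Submodule.finrank_mono (R := K) (s := (U 0 ⊓ B).toSubmodule) (t := (U 0).toSubmodule)
        (fun x hx => hx.1)
    rw [hdim 0, Fin.val_zero] at h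
    exact ⟨U 0 ⊓ B, inf_le_right, by omega⟩
  | succ i ih =>
    intro m hm
    by_cases hle : m ≤ Module.finrank K (U i.castSucc ⊓ B : NonUnitalSubalgebra K E)
    · exact ih m hle
    have hU : U i.castSucc ≤ U i.succ := hmono.monotone (Fin.castSucc_lt_succ).le
    -- The dimension formula for `U i` and `U (i + 1) ⊓ B`, whose sum lies in `U (i + 1)`.
    have h1 := Submodule.finrank_sup_add_finrank_inf_eq (U i.castSucc).toSubmodule
      (U i.succ ⊓ B).toSubmodule
    have h2 : (U i.castSucc).toSubmodule ⊓ (U i.succ ⊓ B).toSubmodule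
        = (U i.castSucc ⊓ B).toSubmodule := by
      ext x
      exact ⟨fun h => ⟨h.1, h.2.2⟩, fun h => ⟨h.1, hU h.1, h.2⟩⟩
    have h3 : Module.finrank K
        ((U i.castSucc).toSubmodule ⊔ (U i.succ ⊓ B).toSubmodule : Submodule K E)
        ≤ Module.finrank K (U i.succ) :=
      Submodule.finrank_mono (R := K) (t := (U i.succ).toSubmodule)
        (sup_le hU (fun x hx => hx.1))
    have h4 : Module.finrank K (U i.castSucc).toSubmodule = (i : ℕ) := hdim i.castSucc
    have h5 : Module.finrank K (U i.succ) = (i : ℕ) + 1 := hdim i.succ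
    have h6 : Module.finrank K (U i.succ ⊓ B).toSubmodule
        = Module.finrank K (U i.succ ⊓ B : NonUnitalSubalgebra K E) := rfl
    have h7 : Module.finrank K (U i.castSucc ⊓ B).toSubmodule
        = Module.finrank K (U i.castSucc ⊓ B : NonUnitalSubalgebra K E) := rfl
    rw [h2, h7, h6, h4] at h1
    exact ⟨U i.succ ⊓ B, inf_le_right, by omega⟩

/-- Let `E` be a finite-dimensional (not necessarily associative, unital or commutative)
algebra over a field admitting a complete flag of subalgebras
`0 = U_0 ⊊ U_1 ⊊ ⋯ ⊊ U_n = E` with `dim U_i = i`. Then the subalgebra lattice of `E` is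
modular if and only if every subalgebra of `E` is a quasi-ideal. -/
theorem modular_iff_forall_quasiIdeal_of_completeFlag
    {K E : Type*} [Field K] [NonUnitalNonAssocRing E] [Module K E]
    [IsScalarTower K E E] [SMulCommClass K E E] [FiniteDimensional K E]
    (U : Fin (Module.finrank K E + 1) → NonUnitalSubalgebra K E)
    (hmono : StrictMono U)
    (hdim : ∀ i, Module.finrank K (U i) = (i : ℕ))
    (h0 : U 0 = ⊥) (htop : U (Fin.last (Module.finrank K E)) = ⊤) :
    IsModularAlgebra K E ↔ ∀ S : NonUnitalSubalgebra K E, IsQuasiIdeal S := by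
  constructor
  · intro hmod S T
    have : IsModularLattice (NonUnitalSubalgebra K E) :=
      ⟨fun {x} y {z} hxz => (hmod x y z hxz).ge⟩
    have hd : StrictMono fun B : NonUnitalSubalgebra K E => Module.finrank K B := fun A B h =>
      Submodule.finrank_lt_finrank_of_lt (s := A.toSubmodule) (t := B.toSubmodule) h
    have hflag : ∀ B : NonUnitalSubalgebra K E, Module.finrank K B ≠ 0 →
        ∃ C ≤ B, Module.finrank K C + 1 = Module.finrank K B := by
      intro B hB
      obtain ⟨C, hC, h⟩ := exists_le_finrank_eq U hmono hdim B (Fin.last _)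
        (Module.finrank K B - 1) (by rw [htop, top_inf_eq]; omega)
      exact ⟨C, hC, by omega⟩
    have key : Module.finrank K (S ⊔ T).toSubmodule + Module.finrank K (S ⊓ T).toSubmodule
        ≤ Module.finrank K S.toSubmodule + Module.finrank K T.toSubmodule :=
      degree_sup_add_degree_inf_le _ hd hflag S _ T rfl
    have h1 := Submodule.finrank_sup_add_finrank_inf_eq S.toSubmodule T.toSubmodule
    have h2 : S.toSubmodule ⊓ T.toSubmodule = (S ⊓ T).toSubmodule := rfl
    rw [h2] at h1
    refine (Submodule.eq_of_le_of_finrank_le (sup_le ?_ ?_) (by omega)).symm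
    · exact le_sup_left (a := S) (b := T)
    · exact le_sup_right (a := S) (b := T)
  · intro hq S T W hSW
    apply NonUnitalSubalgebra.toSubmodule_injective
    rw [hq S]
    change S.toSubmodule ⊔ (T.toSubmodule ⊓ W.toSubmodule) = (S ⊔ T).toSubmodule ⊓ W.toSubmodule
    rw [hq S]
    exact (sup_inf_assoc_of_le T.toSubmodule
      (show S.toSubmodule ≤ W.toSubmodule from hSW)).symm
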